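/- arXiv:1605.08683 — 2 statements merged into one kernel-verified Lean document; each statement's English description precedes it below -/
import Mathlib

section
/- Let 0 < a < 1/2 and b ∈ ℝ, and let φ(z) = e^{a(z-b)²}. Then φ belongs to the Fock space (i.e., φ is entire and ∫_ℂ |φ(z)|² dλ(z) < ∞) and the integral operator S_φ is bounded on the Fock space: there exists a constant C ≥ 0 such that for every polynomial function f : ℂ → ℂ, ∫_ℂ |S_φ f(z)|² dλ(z) ≤ C ∫_ℂ |f(z)|² dλ(z). -/
open MeasureTheory Complex

/-- Integration against the Gaussian measure dλ(z) = π⁻¹ e^{-|z|²} dA(z) on ℂ. -/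
noncomputable def gaussInt (F : ℂ → ℂ) : ℂ :=
  (Real.pi : ℂ)⁻¹ * ∫ w : ℂ, F w * Complex.exp (-(‖w‖ : ℂ)^2)

/-- The singular integral operator S_φ f(z) = ∫_ℂ f(w) e^{zw̄} φ(z - w̄) dλ(w). -/
noncomputable def Sphi (φ : ℂ → ℂ) (f : ℂ → ℂ) (z : ℂ) : ℂ :=
  gaussInt (fun w => f w * Complex.exp (z * starRingEnd ℂ w) * φ (z - starRingEnd ℂ w))

/-!
Conjugating by `f ↦ f e^{-|·|²/2}` turns the factor `e^{z w̄}` into one of modulus `e^{-|z-w|²/2}`.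
Although `φ` is evaluated at `z - w̄` rather than `z - w`, these have the same real part, and
`|e^{a(ζ-b)²}| ≤ e^{γ(Re ζ - Re b)²}` with `γ = |a|² / Re a`. So `S_φ` is dominated by convolution
with `π⁻¹ e^{γ(Re ζ - Re b)² - |ζ|²/2}`, which is integrable as soon as `γ < 1/2`, and Young's
inequality `‖u ⋆ k‖₂ ≤ ‖k‖₁ ‖u‖₂` gives the bound.
-/

open scoped ENNReal NNReal ComplexConjugate

section Young

variable {G : Type*} [MeasurableSpace G] [AddGroup G] [MeasurableAdd₂ G] [MeasurableNeg G]
  {μ : Measure G} [μ.IsAddLeftInvariant] {u k : G → ℝ≥0∞}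

lemma lconvolution_rpow_le [μ.IsNegInvariant] {p : ℝ} (hp : 1 ≤ p)
    (hu : AEMeasurable u μ) (hk : AEMeasurable k μ) (x : G) :
    (u ⋆ₗ[μ] k) x ^ p ≤ (∫⁻ y, k y ∂μ) ^ (p - 1) * ((fun y ↦ u y ^ p) ⋆ₗ[μ] k) x := by
  have hp₀ : 0 < p := one_pos.trans_le hp
  have hp_inv : 0 ≤ 1 - p⁻¹ := sub_nonneg.mpr (inv_le_one_of_one_le₀ hp)
  have hkx : AEMeasurable (fun y ↦ k (-y + x)) μ := by
    have hx : (fun y ↦ -y + x) = fun y ↦ -(-x + y) := by simp only [neg_add_rev, neg_neg]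
    exact hk.comp_quasiMeasurePreserving <| hx ▸ ((Measure.measurePreserving_neg μ).comp
      (measurePreserving_add_left μ (-x))).quasiMeasurePreserving
  have hkx_lintegral : ∫⁻ y, k (-y + x) ∂μ = ∫⁻ y, k y ∂μ := by
    rw [← lintegral_neg_eq_self k, ← lintegral_add_left_eq_self (fun y ↦ k (-y)) (-x)]
    simp only [neg_add_rev, neg_neg]
  -- Hölder's inequality is applied to the splitting `k = k^{1-1/p} k^{1/p}`.
  have hsplit (y : G) :
      u y * k (-y + x) = k (-y + x) ^ (1 - p⁻¹) * (u y ^ p * k (-y + x)) ^ p⁻¹ := by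
    rw [ENNReal.mul_rpow_of_nonneg _ _ (inv_nonneg.mpr hp₀.le), ENNReal.rpow_rpow_inv hp₀.ne',
      mul_left_comm, ← ENNReal.rpow_add_of_nonneg _ _ hp_inv (inv_nonneg.mpr hp₀.le),
      sub_add_cancel, ENNReal.rpow_one]
  calc (u ⋆ₗ[μ] k) x ^ p
      = (∫⁻ y, k (-y + x) ^ (1 - p⁻¹) * (u y ^ p * k (-y + x)) ^ p⁻¹ ∂μ) ^ p := by
        simp only [lconvolution_def, hsplit]
    _ ≤ ((∫⁻ y, k (-y + x) ∂μ) ^ (1 - p⁻¹) * (∫⁻ y, u y ^ p * k (-y + x) ∂μ) ^ p⁻¹) ^ p := by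
        gcongr
        exact ENNReal.lintegral_mul_norm_pow_le hkx ((hu.pow_const p).mul hkx) hp_inv
          (inv_nonneg.mpr hp₀.le) (sub_add_cancel _ _)
    _ = (∫⁻ y, k y ∂μ) ^ (p - 1) * ((fun y ↦ u y ^ p) ⋆ₗ[μ] k) x := by
        rw [ENNReal.mul_rpow_of_nonneg _ _ hp₀.le, ← ENNReal.rpow_mul,
          ENNReal.rpow_inv_rpow hp₀.ne', hkx_lintegral, sub_mul, one_mul, inv_mul_cancel₀ hp₀.ne',
          lconvolution_def]

lemma lintegral_lconvolution [SFinite μ] (hu : AEMeasurable u μ) (hk : AEMeasurable k μ) :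
    ∫⁻ x, (u ⋆ₗ[μ] k) x ∂μ = (∫⁻ y, u y ∂μ) * ∫⁻ y, k y ∂μ := by
  simp only [lconvolution_def]
  rw [lintegral_lintegral_swap (by fun_prop), ← lintegral_mul_const'' _ hu]
  refine lintegral_congr fun y ↦ ?_
  have hky : AEMeasurable (fun x ↦ k (-y + x)) μ :=
    hk.comp_quasiMeasurePreserving (measurePreserving_add_left μ (-y)).quasiMeasurePreserving
  rw [lintegral_const_mul'' _ hky, lintegral_add_left_eq_self]

lemma lintegral_lconvolution_rpow_le [SFinite μ] [μ.IsNegInvariant] {p : ℝ} (hp : 1 ≤ p)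
    (hu : AEMeasurable u μ) (hk : AEMeasurable k μ) :
    ∫⁻ x, (u ⋆ₗ[μ] k) x ^ p ∂μ ≤ (∫⁻ y, k y ∂μ) ^ p * ∫⁻ y, u y ^ p ∂μ :=
  calc ∫⁻ x, (u ⋆ₗ[μ] k) x ^ p ∂μ
      ≤ ∫⁻ x, (∫⁻ y, k y ∂μ) ^ (p - 1) * ((fun y ↦ u y ^ p) ⋆ₗ[μ] k) x ∂μ :=
        lintegral_mono (lconvolution_rpow_le hp hu hk)
    _ = (∫⁻ y, k y ∂μ) ^ (p - 1) * ((∫⁻ y, u y ^ p ∂μ) * ∫⁻ y, k y ∂μ) := by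
        rw [lintegral_const_mul'' _ (by fun_prop), lintegral_lconvolution (hu.pow_const p) hk]
    _ = (∫⁻ y, k y ∂μ) ^ p * ∫⁻ y, u y ^ p ∂μ := by
        nth_rewrite 2 [← ENNReal.rpow_one (∫⁻ y, k y ∂μ)]
        rw [mul_left_comm, ← ENNReal.rpow_add_of_nonneg _ _ (sub_nonneg.mpr hp) zero_le_one,
          sub_add_cancel, mul_comm]

lemma eLpNorm_lconvolution_le [SFinite μ] [μ.IsNegInvariant] {p : ℝ≥0} (hp : 1 ≤ p)
    (hu : AEMeasurable u μ) (hk : AEMeasurable k μ) :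
    eLpNorm (u ⋆ₗ[μ] k) p μ ≤ (∫⁻ y, k y ∂μ) * eLpNorm u p μ := by
  have hp₀ : 0 < p := one_pos.trans_le hp
  rw [← ENNReal.rpow_le_rpow_iff (NNReal.coe_pos.mpr hp₀),
    ENNReal.mul_rpow_of_nonneg _ _ p.coe_nonneg, eLpNorm_nnreal_pow_eq_lintegral hp₀.ne',
    eLpNorm_nnreal_pow_eq_lintegral hp₀.ne']
  exact lintegral_lconvolution_rpow_le (NNReal.coe_le_coe.mpr hp) hu hk

end Young

lemma lpNorm_two_sq {α E : Type*} [MeasurableSpace α] {μ : Measure α} [NormedAddCommGroup E]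
    {f : α → E} (hf : AEStronglyMeasurable f μ) : lpNorm f 2 μ ^ 2 = ∫ x, ‖f x‖ ^ 2 ∂μ := by
  rw [lpNorm_eq_integral_norm_rpow_toReal two_ne_zero ENNReal.ofNat_ne_top hf,
    ENNReal.toReal_ofNat, ← Real.rpow_natCast, ← Real.rpow_mul (by positivity)]
  norm_num

lemma lpNorm_le_of_eLpNorm_le {α E F : Type*} [MeasurableSpace α] {μ : Measure α}
    [NormedAddCommGroup E] [NormedAddCommGroup F] {f : α → E} {g : α → F} {p c : ℝ≥0∞}
    (hf : AEStronglyMeasurable f μ) (hg : MemLp g p μ) (hc : c ≠ ∞)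
    (hfg : eLpNorm f p μ ≤ c * eLpNorm g p μ) :
    lpNorm f p μ ≤ c.toReal * lpNorm g p μ := by
  rw [← toReal_eLpNorm hf, ← toReal_eLpNorm hg.1, ← ENNReal.toReal_mul]
  exact ENNReal.toReal_mono (ENNReal.mul_ne_top hc hg.eLpNorm_ne_top) hfg

lemma exists_norm_polynomial_eval_le {𝕜 : Type*} [NormedField 𝕜] (p : Polynomial 𝕜) :
    ∃ C : ℝ, ∀ x, ‖p.eval x‖ ≤ C * Real.exp ‖x‖ := by
  induction p using Polynomial.induction_on' with
  | add p q hp hq =>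
    obtain ⟨C, hC⟩ := hp
    obtain ⟨D, hD⟩ := hq
    refine ⟨C + D, fun x ↦ ?_⟩
    rw [Polynomial.eval_add, add_mul]
    exact norm_add_le_of_le (hC x) (hD x)
  | monomial n c =>
    refine ⟨‖c‖ * n.factorial, fun x ↦ ?_⟩
    rw [Polynomial.eval_monomial, norm_mul, norm_pow, mul_assoc]
    gcongr
    exact (div_le_iff₀' (by positivity)).mp (Real.pow_div_factorial_le_exp _ (norm_nonneg x) n)

section SingularIntegral

/-- The map `f ↦ f e^{-|·|²/2}`, which carries `L²` of the Gaussian measure to `L²` of the area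
measure and multiplies squared norms by `π`. -/
noncomputable def gaussWeighted (f : ℂ → ℂ) (z : ℂ) : ℂ := f z * Real.exp (-‖z‖ ^ 2 / 2)

/-- The integral kernel of `S_φ` with respect to the area measure, applied to `f`. -/
noncomputable def SphiIntegrand (φ f : ℂ → ℂ) (z w : ℂ) : ℂ :=
  (Real.pi : ℂ)⁻¹ * (f w * cexp (z * conj w) * φ (z - conj w) * cexp (-(‖w‖ : ℂ) ^ 2))

/-- The convolution kernel on `L²` of the area measure that dominates `S_φ`, transported by
`gaussWeighted`, as soon as `|φ(ζ)| ≤ h (Re ζ)`. -/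
noncomputable def majorantKernel (h : ℝ → ℝ) (ζ : ℂ) : ℝ :=
  Real.pi⁻¹ * (h ζ.re * Real.exp (-‖ζ‖ ^ 2 / 2))

variable {φ f : ℂ → ℂ} {h : ℝ → ℝ}

lemma norm_gaussWeighted_sq (f : ℂ → ℂ) (z : ℂ) :
    ‖gaussWeighted f z‖ ^ 2 = ‖f z‖ ^ 2 * Real.exp (-‖z‖ ^ 2) := by
  rw [gaussWeighted, norm_mul, norm_real, Real.norm_of_nonneg (Real.exp_pos _).le, mul_pow,
    ← Real.exp_nat_mul]
  congr 2
  push_cast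
  ring

lemma aestronglyMeasurable_gaussWeighted (hf : AEStronglyMeasurable f) :
    AEStronglyMeasurable (gaussWeighted f) :=
  hf.mul (by fun_prop)

lemma memLp_gaussWeighted_iff (hf : AEStronglyMeasurable f) :
    MemLp (gaussWeighted f) 2 ↔ Integrable fun z ↦ ‖f z‖ ^ 2 * Real.exp (-‖z‖ ^ 2) := by
  simp only [memLp_two_iff_integrable_sq_norm (aestronglyMeasurable_gaussWeighted hf),
    norm_gaussWeighted_sq]

lemma norm_exp_mul_conj (z w : ℂ) :
    ‖cexp (z * conj w)‖ = Real.exp ((‖z‖ ^ 2 + ‖w‖ ^ 2 - ‖z - w‖ ^ 2) / 2) := by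
  rw [norm_exp, Complex.sq_norm (z - w), normSq_sub, ← Complex.sq_norm, ← Complex.sq_norm]
  congr 1
  ring

lemma norm_SphiIntegrand_mul_le (hφ : ∀ ζ, ‖φ ζ‖ ≤ h ζ.re) (f : ℂ → ℂ) (z w : ℂ) :
    ‖SphiIntegrand φ f z w‖ * Real.exp (-‖z‖ ^ 2 / 2) ≤
      ‖gaussWeighted f w‖ * majorantKernel h (z - w) := by
  have hexp : Real.exp ((‖z‖ ^ 2 + ‖w‖ ^ 2 - ‖z - w‖ ^ 2) / 2) * Real.exp (-‖w‖ ^ 2) *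
      Real.exp (-‖z‖ ^ 2 / 2) = Real.exp (-‖w‖ ^ 2 / 2) * Real.exp (-‖z - w‖ ^ 2 / 2) := by
    simp only [← Real.exp_add]
    ring_nf
  calc ‖SphiIntegrand φ f z w‖ * Real.exp (-‖z‖ ^ 2 / 2)
      = Real.pi⁻¹ * ‖f w‖ * ‖φ (z - conj w)‖ *
          (Real.exp ((‖z‖ ^ 2 + ‖w‖ ^ 2 - ‖z - w‖ ^ 2) / 2) * Real.exp (-‖w‖ ^ 2) *
            Real.exp (-‖z‖ ^ 2 / 2)) := by
        rw [SphiIntegrand, norm_mul, norm_mul, norm_mul, norm_mul, norm_exp_mul_conj, norm_inv,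
          norm_real, Real.norm_of_nonneg Real.pi_pos.le, ← ofReal_pow, ← ofReal_neg,
          norm_exp_ofReal]
        ring
    _ ≤ Real.pi⁻¹ * ‖f w‖ * h (z - w).re *
          (Real.exp (-‖w‖ ^ 2 / 2) * Real.exp (-‖z - w‖ ^ 2 / 2)) := by
        rw [hexp]
        gcongr
        simpa only [sub_re, conj_re] using hφ (z - conj w)
    _ = ‖gaussWeighted f w‖ * majorantKernel h (z - w) := by
        rw [gaussWeighted, majorantKernel, norm_mul, norm_real,
          Real.norm_of_nonneg (Real.exp_pos _).le]
        ring

lemma aestronglyMeasurable_SphiIntegrand (hφm : Measurable φ) (hf : AEStronglyMeasurable f) :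
    AEStronglyMeasurable (fun q : ℂ × ℂ ↦ SphiIntegrand φ f q.1 q.2) (volume.prod volume) := by
  have hφ₂ : Measurable fun q : ℂ × ℂ ↦ φ (q.1 - conj q.2) := by fun_prop
  exact (((hf.comp_snd.mul (by fun_prop)).mul hφ₂.aestronglyMeasurable).mul
    (by fun_prop)).const_mul _

lemma Sphi_eq_integral_SphiIntegrand (φ f : ℂ → ℂ) (z : ℂ) :
    Sphi φ f z = ∫ w, SphiIntegrand φ f z w :=
  (integral_const_mul _ _).symm

lemma aestronglyMeasurable_Sphi (hφm : Measurable φ) (hf : AEStronglyMeasurable f) :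
    AEStronglyMeasurable (Sphi φ f) := by
  simpa only [← Sphi_eq_integral_SphiIntegrand] using
    (aestronglyMeasurable_SphiIntegrand hφm hf).integral_prod_right'

lemma integrable_SphiIntegrand (hφm : Measurable φ) (hφ : ∀ ζ, ‖φ ζ‖ ≤ h ζ.re)
    (hh : MemLp (majorantKernel h) 2) (hf : AEStronglyMeasurable f)
    (hf₂ : MemLp (gaussWeighted f) 2) (z : ℂ) : Integrable (SphiIntegrand φ f z) := by
  have hk : MemLp (fun w ↦ majorantKernel h (z - w)) 2 :=
    hh.comp_measurePreserving (volume.measurePreserving_sub_left z)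
  have hφz : Measurable fun w ↦ φ (z - conj w) := by fun_prop
  refine ((hf₂.norm.integrable_mul hk).mul_const (Real.exp (-‖z‖ ^ 2 / 2))⁻¹).mono' ?_
    (ae_of_all _ fun w ↦ ?_)
  · exact (((hf.mul (by fun_prop)).mul hφz.aestronglyMeasurable).mul (by fun_prop)).const_mul _
  · rw [← div_eq_mul_inv, le_div_iff₀ (Real.exp_pos _)]
    exact norm_SphiIntegrand_mul_le hφ f z w

lemma enorm_gaussWeighted_Sphi_le (hφ : ∀ ζ, ‖φ ζ‖ ≤ h ζ.re) (f : ℂ → ℂ) (z : ℂ) :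
    ‖gaussWeighted (Sphi φ f) z‖ₑ ≤
      ((‖gaussWeighted f ·‖ₑ) ⋆ₗ (‖majorantKernel h ·‖ₑ)) z := by
  have hbound (w : ℂ) : ‖SphiIntegrand φ f z w * Real.exp (-‖z‖ ^ 2 / 2)‖ₑ ≤
      ‖gaussWeighted f w‖ₑ * ‖majorantKernel h (-w + z)‖ₑ := by
    rw [neg_add_eq_sub, ← enorm_norm (gaussWeighted f w), ← enorm_mul, enorm_le_iff_norm_le]
    refine le_trans ?_ (le_abs_self _)
    rw [norm_mul, norm_real, Real.norm_of_nonneg (Real.exp_pos _).le]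
    exact norm_SphiIntegrand_mul_le hφ f z w
  rw [gaussWeighted, Sphi_eq_integral_SphiIntegrand, ← integral_mul_const]
  exact (enorm_integral_le_lintegral_enorm _).trans (lintegral_mono hbound)

lemma eLpNorm_gaussWeighted_Sphi_le {p : ℝ≥0} (hp : 1 ≤ p) (hφ : ∀ ζ, ‖φ ζ‖ ≤ h ζ.re)
    (hh : AEStronglyMeasurable (majorantKernel h)) (hf : AEStronglyMeasurable f) :
    eLpNorm (gaussWeighted (Sphi φ f)) p volume ≤
      eLpNorm (majorantKernel h) 1 volume * eLpNorm (gaussWeighted f) p volume := by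
  have hf' : AEMeasurable (‖gaussWeighted f ·‖ₑ) := (aestronglyMeasurable_gaussWeighted hf).enorm
  calc eLpNorm (gaussWeighted (Sphi φ f)) p volume
      ≤ eLpNorm ((‖gaussWeighted f ·‖ₑ) ⋆ₗ (‖majorantKernel h ·‖ₑ)) p volume :=
        eLpNorm_mono_enorm (enorm_gaussWeighted_Sphi_le hφ f)
    _ ≤ eLpNorm (majorantKernel h) 1 volume * eLpNorm (gaussWeighted f) p volume := by
        rw [eLpNorm_one_eq_lintegral_enorm, ← eLpNorm_enorm (gaussWeighted f)]
        exact eLpNorm_lconvolution_le hp hf' hh.enorm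

lemma memLp_gaussWeighted_of_norm_le {p : ℝ≥0∞} (hφm : AEStronglyMeasurable φ)
    (hφ : ∀ ζ, ‖φ ζ‖ ≤ h ζ.re) (hh : MemLp (majorantKernel h) p) :
    MemLp (gaussWeighted φ) p := by
  refine hh.of_le_mul (c := Real.pi) (aestronglyMeasurable_gaussWeighted hφm)
    (ae_of_all _ fun ζ ↦ ?_)
  calc ‖gaussWeighted φ ζ‖ = ‖φ ζ‖ * Real.exp (-‖ζ‖ ^ 2 / 2) := by
        rw [gaussWeighted, norm_mul, norm_real, Real.norm_of_nonneg (Real.exp_pos _).le]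
    _ ≤ h ζ.re * Real.exp (-‖ζ‖ ^ 2 / 2) := by gcongr; exact hφ ζ
    _ = Real.pi * majorantKernel h ζ := (mul_inv_cancel_left₀ Real.pi_ne_zero _).symm
    _ ≤ Real.pi * ‖majorantKernel h ζ‖ := by gcongr; exact le_abs_self _

lemma memLp_gaussWeighted_Sphi (hφm : Measurable φ) (hφ : ∀ ζ, ‖φ ζ‖ ≤ h ζ.re) {p : ℝ≥0}
    (hp : 1 ≤ p) (hh : MemLp (majorantKernel h) 1) (hf : AEStronglyMeasurable f)
    (hfp : MemLp (gaussWeighted f) p) : MemLp (gaussWeighted (Sphi φ f)) p :=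
  ⟨aestronglyMeasurable_gaussWeighted (aestronglyMeasurable_Sphi hφm hf),
    (eLpNorm_gaussWeighted_Sphi_le hp hφ hh.1 hf).trans_lt (ENNReal.mul_lt_top hh.2 hfp.2)⟩

lemma integral_norm_Sphi_sq_le (hφm : Measurable φ) (hφ : ∀ ζ, ‖φ ζ‖ ≤ h ζ.re)
    (hh : MemLp (majorantKernel h) 1) (hf : AEStronglyMeasurable f)
    (hf₂ : MemLp (gaussWeighted f) 2) :
    ∫ z, ‖Sphi φ f z‖ ^ 2 * Real.exp (-‖z‖ ^ 2) ≤
      lpNorm (majorantKernel h) 1 volume ^ 2 * ∫ z, ‖f z‖ ^ 2 * Real.exp (-‖z‖ ^ 2) := by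
  have hSf := aestronglyMeasurable_gaussWeighted (aestronglyMeasurable_Sphi hφm hf)
  have hnorm : lpNorm (gaussWeighted (Sphi φ f)) 2 volume ≤
      lpNorm (majorantKernel h) 1 volume * lpNorm (gaussWeighted f) 2 volume := by
    rw [← toReal_eLpNorm hh.1]
    exact lpNorm_le_of_eLpNorm_le hSf hf₂ hh.2.ne
      (eLpNorm_gaussWeighted_Sphi_le (p := 2) one_le_two hφ hh.1 hf)
  simp only [← norm_gaussWeighted_sq]
  rw [← lpNorm_two_sq hSf, ← lpNorm_two_sq hf₂.1, ← mul_pow]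
  gcongr
  exact lpNorm_nonneg

end SingularIntegral

section GaussianSymbol

lemma norm_sq_eq_re_sq_add_im_sq (z : ℂ) : ‖z‖ ^ 2 = z.re ^ 2 + z.im ^ 2 := by
  rw [Complex.sq_norm, normSq_apply, sq, sq]

lemma integrable_exp_mul_sub_sq_sub_mul_sq {γ δ : ℝ} (hγδ : γ < δ) (β : ℝ) :
    Integrable fun x : ℝ ↦ Real.exp (γ * (x - β) ^ 2 - δ * x ^ 2) := by
  have hre : ((γ - δ : ℝ) : ℂ).re < 0 := sub_neg.mpr hγδ
  refine (integrable_cexp_quadratic' hre (-2 * γ * β : ℝ) (γ * β ^ 2 : ℝ)).norm.congr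
    (ae_of_all _ fun x ↦ ?_)
  simp only [← ofReal_pow, ← ofReal_mul, ← ofReal_add, norm_exp_ofReal]
  ring_nf

lemma integrable_exp_mul_re_sub_sq_sub_mul_norm_sq {γ δ : ℝ} (hγδ : γ < δ) (hδ : 0 < δ) (β : ℝ) :
    Integrable fun z : ℂ ↦ Real.exp (γ * (z.re - β) ^ 2 - δ * ‖z‖ ^ 2) := by
  have hprod := (integrable_exp_mul_sub_sq_sub_mul_sq hγδ β).mul_prod (integrable_exp_neg_mul_sq hδ)
  refine ((volume_preserving_equiv_real_prod.integrable_comp_emb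
    measurableEquivRealProd.measurableEmbedding).mpr hprod).congr (ae_of_all _ fun z ↦ ?_)
  simp only [Function.comp_apply, measurableEquivRealProd_apply, ← Real.exp_add,
    norm_sq_eq_re_sq_add_im_sq]
  ring_nf

lemma re_mul_re_mul_sq_le (a z : ℂ) : a.re * (a * z ^ 2).re ≤ ‖a‖ ^ 2 * z.re ^ 2 := by
  have hsquare : ‖a‖ ^ 2 * z.re ^ 2 - a.re * (a * z ^ 2).re =
      (a.im * z.re + a.re * z.im) ^ 2 := by
    rw [norm_sq_eq_re_sq_add_im_sq, mul_re, sq z, mul_re, mul_im]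
    ring
  linarith [sq_nonneg (a.im * z.re + a.re * z.im)]

lemma norm_exp_mul_sub_sq_le {a : ℂ} (ha : 0 < a.re) (b z : ℂ) :
    ‖cexp (a * (z - b) ^ 2)‖ ≤ Real.exp (‖a‖ ^ 2 / a.re * (z.re - b.re) ^ 2) := by
  rw [norm_exp, Real.exp_le_exp, div_mul_eq_mul_div, le_div_iff₀' ha, ← sub_re]
  exact re_mul_re_mul_sq_le a (z - b)

lemma majorantKernel_gaussian_eq (γ β : ℝ) :
    majorantKernel (fun x ↦ Real.exp (γ * (x - β) ^ 2)) =
      fun ζ ↦ Real.pi⁻¹ * Real.exp (γ * (ζ.re - β) ^ 2 - 1 / 2 * ‖ζ‖ ^ 2) := by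
  funext ζ
  rw [majorantKernel, ← Real.exp_add]
  ring_nf

lemma memLp_one_majorantKernel_gaussian {γ : ℝ} (hγ : γ < 1 / 2) (β : ℝ) :
    MemLp (majorantKernel fun x ↦ Real.exp (γ * (x - β) ^ 2)) 1 := by
  rw [memLp_one_iff_integrable, majorantKernel_gaussian_eq]
  exact (integrable_exp_mul_re_sub_sq_sub_mul_norm_sq hγ one_half_pos β).const_mul _

lemma memLp_two_majorantKernel_gaussian {γ : ℝ} (hγ : γ < 1 / 2) (β : ℝ) :
    MemLp (majorantKernel fun x ↦ Real.exp (γ * (x - β) ^ 2)) 2 := by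
  rw [memLp_two_iff_integrable_sq (memLp_one_majorantKernel_gaussian hγ β).1,
    majorantKernel_gaussian_eq]
  refine ((integrable_exp_mul_re_sub_sq_sub_mul_norm_sq (γ := 2 * γ) (by linarith) one_pos
    β).const_mul (Real.pi⁻¹ ^ 2)).congr (ae_of_all _ fun ζ ↦ ?_)
  simp only [mul_pow, ← Real.exp_nat_mul]
  ring_nf

lemma integrable_norm_eval_sq_mul_exp_neg (p : Polynomial ℂ) :
    Integrable fun z ↦ ‖p.eval z‖ ^ 2 * Real.exp (-‖z‖ ^ 2) := by
  obtain ⟨C, hC⟩ := exists_norm_polynomial_eval_le p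
  have hgauss : Integrable fun z : ℂ ↦ Real.exp (-(1 / 2) * ‖z‖ ^ 2) := by
    simpa using integrable_exp_mul_re_sub_sq_sub_mul_norm_sq (one_half_pos (α := ℝ)) one_half_pos 0
  refine (hgauss.const_mul (C ^ 2 * Real.exp 2)).mono' (by fun_prop) (ae_of_all _ fun z ↦ ?_)
  have hexp : Real.exp ‖z‖ ^ 2 * Real.exp (-‖z‖ ^ 2) ≤
      Real.exp 2 * Real.exp (-(1 / 2) * ‖z‖ ^ 2) := by
    rw [← Real.exp_nat_mul, ← Real.exp_add, ← Real.exp_add, Real.exp_le_exp]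
    push_cast
    nlinarith [sq_nonneg (‖z‖ - 2)]
  calc ‖‖p.eval z‖ ^ 2 * Real.exp (-‖z‖ ^ 2)‖
      = ‖p.eval z‖ ^ 2 * Real.exp (-‖z‖ ^ 2) := Real.norm_of_nonneg (by positivity)
    _ ≤ (C * Real.exp ‖z‖) ^ 2 * Real.exp (-‖z‖ ^ 2) := by gcongr; exact hC z
    _ = C ^ 2 * (Real.exp ‖z‖ ^ 2 * Real.exp (-‖z‖ ^ 2)) := by ring
    _ ≤ C ^ 2 * Real.exp 2 * Real.exp (-(1 / 2) * ‖z‖ ^ 2) := by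
        rw [mul_assoc]
        gcongr

end GaussianSymbol

-- The condition says that `a` lies in the open disc with diameter `(0, 1/2)`.
theorem gaussian_symbol_bounded_general (a b : ℂ) (ha : ‖a‖ ^ 2 < a.re / 2) (φ : ℂ → ℂ)
    (hφ : ∀ z : ℂ, φ z = cexp (a * (z - b) ^ 2)) :
    (Differentiable ℂ φ ∧ Integrable (fun z : ℂ ↦ ‖φ z‖ ^ 2 * Real.exp (-‖z‖ ^ 2))) ∧
    ∃ C : ℝ, 0 ≤ C ∧ ∀ f : ℂ → ℂ, AEStronglyMeasurable f →
      Integrable (fun z : ℂ ↦ ‖f z‖ ^ 2 * Real.exp (-‖z‖ ^ 2)) →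
      (∀ z, Integrable fun w ↦
        f w * cexp (z * conj w) * φ (z - conj w) * cexp (-(‖w‖ : ℂ) ^ 2)) ∧
      Integrable (fun z : ℂ ↦ ‖Sphi φ f z‖ ^ 2 * Real.exp (-‖z‖ ^ 2)) ∧
      (∫ z : ℂ, ‖Sphi φ f z‖ ^ 2 * Real.exp (-‖z‖ ^ 2) / Real.pi) ≤
        C * ∫ z : ℂ, ‖f z‖ ^ 2 * Real.exp (-‖z‖ ^ 2) / Real.pi := by
  have ha_re : 0 < a.re := by linarith [sq_nonneg ‖a‖]
  have hγ : ‖a‖ ^ 2 / a.re < 1 / 2 := by rw [div_lt_iff₀ ha_re]; linarith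
  have hdiff : Differentiable ℂ φ := by rw [funext hφ]; fun_prop
  have hφm : Measurable φ := hdiff.continuous.measurable
  have hφ_le (ζ : ℂ) : ‖φ ζ‖ ≤ Real.exp (‖a‖ ^ 2 / a.re * (ζ.re - b.re) ^ 2) :=
    hφ ζ ▸ norm_exp_mul_sub_sq_le ha_re b ζ
  set k := majorantKernel fun x ↦ Real.exp (‖a‖ ^ 2 / a.re * (x - b.re) ^ 2)
  have hk₁ : MemLp k 1 := memLp_one_majorantKernel_gaussian hγ b.re
  have hk₂ : MemLp k 2 := memLp_two_majorantKernel_gaussian hγ b.re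
  refine ⟨⟨hdiff, (memLp_gaussWeighted_iff hφm.aestronglyMeasurable).mp
    (memLp_gaussWeighted_of_norm_le hφm.aestronglyMeasurable hφ_le hk₂)⟩,
    lpNorm k 1 volume ^ 2, sq_nonneg _, fun f hf hf_int ↦ ?_⟩
  have hf₂ : MemLp (gaussWeighted f) 2 := (memLp_gaussWeighted_iff hf).mpr hf_int
  refine ⟨fun z ↦ ?_, ?_, ?_⟩
  · exact (integrable_const_mul_iff (by simp) _).mp
      (integrable_SphiIntegrand hφm hφ_le hk₂ hf hf₂ z)
  · exact (memLp_gaussWeighted_iff (aestronglyMeasurable_Sphi hφm hf)).mp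
      (memLp_gaussWeighted_Sphi hφm hφ_le (p := 2) one_le_two hk₁ hf hf₂)
  · rw [integral_div, integral_div, ← mul_div_assoc]
    gcongr
    exact integral_norm_Sphi_sq_le hφm hφ_le hk₁ hf hf₂

/-- For 0 < a < 1/2 and b ∈ ℝ, the function φ(z) = e^{a(z-b)²} belongs to the Fock space and
the operator S_φ is bounded on the Fock space. -/
theorem gaussian_symbol_bounded (a b : ℝ) (ha : 0 < a) (ha2 : a < 1/2) (φ : ℂ → ℂ)
    (hφ : ∀ z : ℂ, φ z = Complex.exp ((a : ℂ) * (z - (b : ℂ))^2)) :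
    (Differentiable ℂ φ ∧ Integrable (fun z : ℂ => ‖φ z‖^2 * Real.exp (-‖z‖^2))) ∧
    ∃ C : ℝ, 0 ≤ C ∧ ∀ p : Polynomial ℂ,
      (∫ z : ℂ, ‖Sphi φ (fun w => p.eval w) z‖^2 * Real.exp (-‖z‖^2) / Real.pi) ≤
        C * ∫ z : ℂ, ‖p.eval z‖^2 * Real.exp (-‖z‖^2) / Real.pi := by
  have ha_disc : ‖(a : ℂ)‖ ^ 2 < (a : ℂ).re / 2 := by
    rw [norm_real, Real.norm_of_nonneg ha.le, ofReal_re]; nlinarith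
  obtain ⟨hφ_fock, C, hC, hSphi⟩ := gaussian_symbol_bounded_general a b ha_disc φ hφ
  exact ⟨hφ_fock, C, hC, fun p ↦
    (hSphi _ p.continuous.aestronglyMeasurable (integrable_norm_eval_sq_mul_exp_neg p)).2.2⟩
end

section
/- For every z ∈ ℂ, (1/π) ∫_ℝ e^{-t²}(e^{√2 t z} - 1)/t dt = (2/√π) A(z/√2), where the integrand is absolutely integrable (it extends continuously by the value √2 z at t = 0 and has Gaussian decay at infinity). In particular, the principal-value integral φ(z) = (1/π) p.v.∫_ℝ e^{-t² + √2 t z}/t dt defines the entire function (2/√π) A(z/√2), which satisfies φ'(z) = √(2/π) e^{z²/2} and φ(0) = 0. -/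
open MeasureTheory Complex

/-- A(z) = ∫₀^z e^{u²} du, the antiderivative of e^{z²} vanishing at 0, the integral being
taken along the segment from 0 to z (equivalently, any path from 0 to z). -/
noncomputable def Afun (z : ℂ) : ℂ :=
  ∫ t in (0:ℝ)..1, z * Complex.exp (((t:ℂ) * z)^2)

/-!
Writing `(e^{ct} - 1) / t = ∫₀¹ c e^{sct} ds` removes the singularity at `t = 0`. For `s ∈ [0, 1]`,
convexity gives `|e^{sct}| ≤ 1 + |e^{ct}|`, so that a weight integrable both alone and against
`e^{ct}` allows the order of integration to be exchanged. For the weight `e^{-bt²}` the inner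
integral is the Gaussian one, proportional to `e^{(sc)² / (4b)}`, and for `b = 1` what remains is
the segment integral defining `A (c / 2)`.
-/

theorem hasDerivAt_integral_segment {E : Type*} [NormedAddCommGroup E] [NormedSpace ℂ E]
    [CompleteSpace E] {f : ℂ → E} (hf : Differentiable ℂ f) (z : ℂ) :
    HasDerivAt (fun w : ℂ ↦ ∫ t in (0 : ℝ)..1, w • f (t * w)) (f z) z := by
  obtain ⟨F, hF⟩ := hf.isExactOn_univ
  have integral_eq (w : ℂ) : ∫ t in (0 : ℝ)..1, w • f (t * w) = F w - F 0 := by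
    have hcont : Continuous fun t : ℝ ↦ f (0 + t • w) := hf.continuous.comp (by fun_prop)
    simpa using intervalIntegral.integral_unitInterval_deriv_eq_sub hcont.continuousOn
      fun t _ ↦ hF (0 + t • w) (Set.mem_univ _)
  simpa only [integral_eq] using (hF z (Set.mem_univ z)).sub_const (F 0)

theorem hasDerivAt_Afun (z : ℂ) : HasDerivAt Afun (cexp (z ^ 2)) z :=
  hasDerivAt_integral_segment (f := fun w ↦ cexp (w ^ 2)) (by fun_prop) z

theorem cexp_sub_one_eq_integral (w : ℂ) :
    cexp w - 1 = w * ∫ s in (0 : ℝ)..1, cexp (s * w) := by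
  have hcont : Continuous fun s : ℝ ↦ cexp (0 + s • w) := by fun_prop
  simpa using (intervalIntegral.integral_unitInterval_deriv_eq_sub hcont.continuousOn
    fun s _ ↦ hasDerivAt_exp (0 + s • w)).symm

theorem norm_cexp_mul_le_one_add {s : ℝ} (hs₀ : 0 ≤ s) (hs₁ : s ≤ 1) (w : ℂ) :
    ‖cexp (s * w)‖ ≤ 1 + ‖cexp w‖ := by
  simp only [norm_exp, re_ofReal_mul]
  calc Real.exp (s * w.re)
      ≤ (1 - s) * Real.exp 0 + s * Real.exp w.re := by
        simpa using convexOn_exp.2 (Set.mem_univ 0) (Set.mem_univ w.re) (sub_nonneg.2 hs₁) hs₀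
          (by ring)
    _ ≤ 1 + Real.exp w.re := by
        rw [Real.exp_zero, mul_one]
        gcongr
        · linarith
        · exact mul_le_of_le_one_left (Real.exp_nonneg _) hs₁

section LaplaceTransform

variable {μ : Measure ℝ} {f : ℝ → ℂ} {c : ℂ}

theorem integrable_prod_mul_cexp_segment (hf : Integrable f μ)
    (hfc : Integrable (fun t : ℝ ↦ f t * cexp (c * t)) μ) :
    Integrable (Function.uncurry fun t s : ℝ ↦ c * (f t * cexp (s * (c * t))))
      (μ.prod (volume.restrict (Set.Ioc 0 1))) := by
  have bound_integrable := (hf.norm.add hfc.norm).comp_fst (volume.restrict (Set.Ioc (0 : ℝ) 1))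
  have mem_Ioc : ∀ᵐ p ∂μ.prod (volume.restrict (Set.Ioc (0 : ℝ) 1)), p.2 ∈ Set.Ioc (0 : ℝ) 1 :=
    Measure.quasiMeasurePreserving_snd.ae (ae_restrict_mem measurableSet_Ioc)
  refine (bound_integrable.mono' ?_ ?_).const_mul c
  · exact hf.aestronglyMeasurable.comp_fst.mul
      (Continuous.aestronglyMeasurable (by fun_prop))
  · filter_upwards [mem_Ioc] with ⟨t, s⟩ hs
    calc ‖f t * cexp (s * (c * t))‖
        ≤ ‖f t‖ * (1 + ‖cexp (c * t)‖) := by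
          rw [norm_mul]
          gcongr
          exact norm_cexp_mul_le_one_add hs.1.le hs.2 _
      _ = ‖f t‖ + ‖f t * cexp (c * t)‖ := by rw [norm_mul]; ring

theorem integral_mul_cexp_sub_one_div [SFinite μ] [NullSingletonClass μ]
    (hf : Integrable f μ) (hfc : Integrable (fun t : ℝ ↦ f t * cexp (c * t)) μ) :
    ∫ t : ℝ, f t * (cexp (c * t) - 1) / t ∂μ
      = ∫ s in (0 : ℝ)..1, c * ∫ t : ℝ, f t * cexp (s * (c * t)) ∂μ := by
  have integrand_eq : ∀ᵐ t : ℝ ∂μ, f t * (cexp (c * t) - 1) / t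
      = ∫ s in Set.Ioc (0 : ℝ) 1, c * (f t * cexp (s * (c * t))) := by
    filter_upwards [μ.ae_ne 0] with t ht
    have ht' : (t : ℂ) ≠ 0 := ofReal_ne_zero.2 ht
    rw [cexp_sub_one_eq_integral, integral_const_mul, integral_const_mul,
      intervalIntegral.integral_of_le zero_le_one]
    field_simp
  rw [integral_congr_ae integrand_eq,
    integral_integral_swap (integrable_prod_mul_cexp_segment hf hfc),
    intervalIntegral.integral_of_le zero_le_one]
  simp only [integral_const_mul]

end LaplaceTransform

section Gaussian

variable {b : ℂ}

theorem integrable_gaussian_mul_cexp (hb : 0 < b.re) (c : ℂ) :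
    Integrable fun t : ℝ ↦ cexp (-b * t ^ 2) * cexp (c * t) := by
  simpa only [Complex.exp_add, Complex.exp_zero, mul_one] using integrable_cexp_quadratic hb c 0

theorem integral_gaussian_mul_cexp (hb : 0 < b.re) (c : ℂ) :
    ∫ t : ℝ, cexp (-b * t ^ 2) * cexp (c * t)
      = (Real.pi / b) ^ (1 / 2 : ℂ) * cexp (c ^ 2 / (4 * b)) := by
  have hb' : (-b).re < 0 := by simpa using hb
  simpa [Complex.exp_add, div_neg] using integral_cexp_quadratic hb' c 0

theorem integral_gaussian_mul_cexp_sub_one_div (hb : 0 < b.re) (c : ℂ) :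
    ∫ t : ℝ, cexp (-b * t ^ 2) * (cexp (c * t) - 1) / t
      = (Real.pi / b) ^ (1 / 2 : ℂ) * ∫ s in (0 : ℝ)..1, c * cexp ((s * c) ^ 2 / (4 * b)) := by
  rw [integral_mul_cexp_sub_one_div (integrable_cexp_neg_mul_sq hb)
    (integrable_gaussian_mul_cexp hb c), ← intervalIntegral.integral_const_mul]
  congr 1 with s
  simp only [← mul_assoc (s : ℂ), integral_gaussian_mul_cexp hb]
  ring

end Gaussian

theorem integral_gaussian_mul_cexp_sub_one_div_eq_Afun (c : ℂ) :
    ∫ t : ℝ, cexp (-(t : ℂ) ^ 2) * (cexp (c * t) - 1) / t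
      = 2 * Real.sqrt Real.pi * Afun (c / 2) := by
  have sqrt_pi : (Real.pi : ℂ) ^ (1 / 2 : ℂ) = Real.sqrt Real.pi := by
    rw [Real.sqrt_eq_rpow, ofReal_cpow Real.pi_pos.le]
    norm_num
  have integral_eq : ∫ s in (0 : ℝ)..1, c * cexp ((s * c) ^ 2 / 4) = 2 * Afun (c / 2) := by
    rw [Afun, ← intervalIntegral.integral_const_mul]
    congr 1 with s
    ring_nf
  have h := integral_gaussian_mul_cexp_sub_one_div (b := 1) one_pos c
  simp only [neg_mul, one_mul, mul_one, div_one, sqrt_pi, integral_eq] at h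
  rw [h]
  ring

/-- (1/π) ∫ e^{-t²}(e^{√2 tz} - 1)/t dt = (2/√π) A(z/√2); this is the principal-value integral
φ(z) = (1/π) p.v.∫ e^{-t² + √2 tz}/t dt, which defines an entire function satisfying
φ'(z) = √(2/π) e^{z²/2} and φ(0) = 0. -/
theorem pv_integral_eq_A (z : ℂ) :
    ((Real.pi : ℂ))⁻¹ *
        (∫ t : ℝ, Complex.exp (-(t:ℂ)^2) * (Complex.exp ((Real.sqrt 2 : ℂ) * (t:ℂ) * z) - 1) / (t:ℂ))
      = 2 / (Real.sqrt Real.pi : ℂ) * Afun (z / (Real.sqrt 2 : ℂ)) ∧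
    HasDerivAt (fun w : ℂ => 2 / (Real.sqrt Real.pi : ℂ) * Afun (w / (Real.sqrt 2 : ℂ)))
      (((Real.sqrt (2 / Real.pi) : ℝ) : ℂ) * Complex.exp (z^2 / 2)) z ∧
    Afun 0 = 0 := by
  have sqrt_two_sq : (Real.sqrt 2 : ℂ) ^ 2 = 2 := mod_cast Real.sq_sqrt zero_le_two
  have sqrt_two_ne : (Real.sqrt 2 : ℂ) ≠ 0 := by simp
  have sqrt_pi_sq : (Real.sqrt Real.pi : ℂ) ^ 2 = Real.pi := mod_cast Real.sq_sqrt Real.pi_pos.le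
  have sqrt_pi_ne : (Real.sqrt Real.pi : ℂ) ≠ 0 := mod_cast (Real.sqrt_pos.2 Real.pi_pos).ne'
  refine ⟨?_, ?_, by simp [Afun]⟩
  · have half_scale : Real.sqrt 2 * z / 2 = z / Real.sqrt 2 := by
      rw [div_eq_div_iff two_ne_zero sqrt_two_ne, ← sqrt_two_sq]
      ring
    simp only [mul_right_comm _ _ z]
    rw [integral_gaussian_mul_cexp_sub_one_div_eq_Afun, half_scale, ← sqrt_pi_sq]
    field_simp
  · have hderiv := ((hasDerivAt_Afun (z / Real.sqrt 2)).comp z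
      ((hasDerivAt_id z).div_const (Real.sqrt 2 : ℂ))).const_mul (2 / (Real.sqrt Real.pi : ℂ))
    refine hderiv.congr_deriv ?_
    rw [div_pow, sqrt_two_sq, Real.sqrt_div zero_le_two, ofReal_div]
    field_simp
    rw [sqrt_two_sq]
end
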